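/- (Second formula.) Let 1 ≤ k ≤ n, let χ be a function from the symmetric group S_n to ℂ, and let A, X^1, …, X^k ∈ M_n(ℂ). Then D^k d_χ(A)(X^1,…,X^k) = Σ_{σ∈S_k} Σ_{α,β∈Q_{k,n}} d_χ(X^σ_β[α|β] ⊕_{α|β} A(α|β)). In particular, D^k d_χ(A)(X,…,X) = k! · Σ_{α,β∈Q_{k,n}} d_χ(X[α|β] ⊕_{α|β} A(α|β)). -/

import Mathlib

open scoped Classical

attribute [local instance] Matrix.normedAddCommGroup Matrix.normedSpace

noncomputable section

/-- The immanant `d_χ(A) = ∑_{σ ∈ S_n} χ(σ) ∏_i a_{i σ(i)}`. -/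
def imm {n : ℕ} (χ : Equiv.Perm (Fin n) → ℂ) (A : Matrix (Fin n) (Fin n) ℂ) : ℂ :=
  ∑ σ : Equiv.Perm (Fin n), χ σ * ∏ i, A i (σ i)

/-- `A(i|j)`: replace row `i` and column `j` of `A` by zeros, except the `(i,j)` entry,
which is set to `1`. -/
def unitRowCol {n : ℕ} (A : Matrix (Fin n) (Fin n) ℂ) (i j : Fin n) :
    Matrix (Fin n) (Fin n) ℂ :=
  Matrix.of fun p q => if p = i then (if q = j then 1 else 0) else if q = j then 0 else A p q

/-- The immanantal adjoint: its `(i,j)` entry is `d_χ(A(i|j))`. -/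
def immAdj {n : ℕ} (χ : Equiv.Perm (Fin n) → ℂ) (A : Matrix (Fin n) (Fin n) ℂ) :
    Matrix (Fin n) (Fin n) ℂ :=
  Matrix.of fun i j => imm χ (unitRowCol A i j)

/-- `A(j;X)`: replace the `j`-th column of `A` by the `j`-th column of `X`. -/
def replCol {n : ℕ} (A X : Matrix (Fin n) (Fin n) ℂ) (j : Fin n) :
    Matrix (Fin n) (Fin n) ℂ :=
  Matrix.of fun p q => if q = j then X p q else A p q

/-- `Q_{k,n}`: the strictly increasing maps from `Fin k` to `Fin n`. -/
def Qset (k n : ℕ) : Finset (Fin k → Fin n) := Finset.univ.filter StrictMono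

/-- `A(α ; X^1, …, X^k)`: replace, for each `l`, the `α(l)`-th column of `A` by the
`α(l)`-th column of `X^l`. -/
def replCols {n k : ℕ} (A : Matrix (Fin n) (Fin n) ℂ) (α : Fin k → Fin n)
    (X : Fin k → Matrix (Fin n) (Fin n) ℂ) : Matrix (Fin n) (Fin n) ℂ :=
  Matrix.of fun p q => if h : ∃ l, α l = q then X (Classical.choose h) p q else A p q

/-- The mixed immanant `Δ_χ(Y^1, …, Y^n)`. -/
def mixedImm {n : ℕ} (χ : Equiv.Perm (Fin n) → ℂ)
    (Y : Fin n → Matrix (Fin n) (Fin n) ℂ) : ℂ :=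
  ((n.factorial : ℂ))⁻¹ * ∑ σ : Equiv.Perm (Fin n), imm χ (Matrix.of fun p q => Y (σ q) p q)

/-- The family `(A, …, A, X^1, …, X^k)` with `n - k` copies of `A`. -/
def padFam {n k : ℕ} (A : Matrix (Fin n) (Fin n) ℂ) (X : Fin k → Matrix (Fin n) (Fin n) ℂ) :
    Fin n → Matrix (Fin n) (Fin n) ℂ :=
  fun i => if h : (i : ℕ) < n - k then A else X ⟨(i : ℕ) - (n - k), by have := i.isLt; omega⟩

/-- The increasing enumeration `ᾱ` of the complement of the range of `α`. -/
def complEnum {n k : ℕ} (α : Fin k → Fin n) : Fin (n - k) → Fin n :=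
  if h : (Finset.univ.filter fun j => j ∉ Set.range α).card = n - k then
    (Finset.univ.filter fun j => j ∉ Set.range α).orderEmbOfFin h
  else fun i => ⟨0, by have := i.isLt; omega⟩

/-- `X(α|β)`: the submatrix obtained by deleting rows `α(1), …, α(k)` and columns
`β(1), …, β(k)`. -/
def delSub {n k : ℕ} (X : Matrix (Fin n) (Fin n) ℂ) (α β : Fin k → Fin n) :
    Matrix (Fin (n - k)) (Fin (n - k)) ℂ :=
  X.submatrix (complEnum α) (complEnum β)

/-- `A ⊕_{α|β} B`. -/
def dSum {n k : ℕ} (α β : Fin k → Fin n) (A : Matrix (Fin k) (Fin k) ℂ)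
    (B : Matrix (Fin (n - k)) (Fin (n - k)) ℂ) : Matrix (Fin n) (Fin n) ℂ :=
  Matrix.of fun i j =>
    if hi : ∃ p, α p = i then
      (if hj : ∃ q, β q = j then A (Classical.choose hi) (Classical.choose hj) else 0)
    else if _hj : ∃ q, β q = j then 0
    else if hi' : ∃ p, complEnum α p = i then
      (if hj' : ∃ q, complEnum β q = j then B (Classical.choose hi') (Classical.choose hj')
       else 0)
    else 0

/-- `X{α|β}`: zero out the entries `(i,j)` with `i ∈ Im α, j ∉ Im β` and those with
`i ∉ Im α, j ∈ Im β`. -/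
def maskM {n k : ℕ} (X : Matrix (Fin n) (Fin n) ℂ) (α β : Fin k → Fin n) :
    Matrix (Fin n) (Fin n) ℂ :=
  Matrix.of fun i j =>
    if ((∃ p, α p = i) ∧ ¬ (∃ q, β q = j)) ∨ (¬ (∃ p, α p = i) ∧ (∃ q, β q = j)) then 0
    else X i j

/-- `X^σ_β`: the matrix whose `β(p)`-th column is the `β(p)`-th column of `X^{σ(p)}`,
all other columns being zero. -/
def zRepl {n k : ℕ} (β : Fin k → Fin n) (σ : Equiv.Perm (Fin k))
    (X : Fin k → Matrix (Fin n) (Fin n) ℂ) : Matrix (Fin n) (Fin n) ℂ :=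
  Matrix.of fun p q => if h : ∃ l, β l = q then X (σ (Classical.choose h)) p q else 0

/-- `|α| = α(1) + ⋯ + α(k)` (with `1`-based values). -/
def wt {k n : ℕ} (α : Fin k → Fin n) : ℕ := ∑ l, ((α l : ℕ) + 1)

/-- The mixed discriminant `Δ(B^1, …, B^k)`. -/
def mixedDisc {k : ℕ} (B : Fin k → Matrix (Fin k) (Fin k) ℂ) : ℂ :=
  ((k.factorial : ℂ))⁻¹ * ∑ σ : Equiv.Perm (Fin k), (Matrix.of fun p q => B (σ q) p q).det

/-- `A{id|β}`: zero out the entries of the first `k` rows in the columns outside `Im β`,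
and the entries of the remaining rows in the columns of `Im β`. -/
def maskId {n k : ℕ} (A : Matrix (Fin n) (Fin n) ℂ) (β : Fin k → Fin n) :
    Matrix (Fin n) (Fin n) ℂ :=
  Matrix.of fun i j =>
    if ((i : ℕ) < k ∧ j ∉ Set.range β) ∨ (k ≤ (i : ℕ) ∧ j ∈ Set.range β) then 0 else A i j

/-- The `m`-th compound of an `n × n` matrix, with rows and columns indexed by `Q_{m,n}`. -/
def compound (m n : ℕ) (A : Matrix (Fin n) (Fin n) ℂ) :
    Matrix {α : Fin m → Fin n // StrictMono α} {α : Fin m → Fin n // StrictMono α} ℂ :=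
  Matrix.of fun α β => (A.submatrix α.1 β.1).det

end

/-!
The immanant is a multilinear function of the columns of a matrix, so its `k`-th derivative at `A`
is the sum, over all injections `e` of the `k` directions into the `n` columns, of the immanants of
`A` with its column `e l` replaced by that of `X l`. Every injection is uniquely a strictly
increasing map `β` precomposed with a permutation `σ`. Finally, each permutation `τ` of the
immanant maps exactly one `k`-set `Im α` of rows onto the columns `Im β`, and the terms with a
given `α` are exactly those surviving when the two off-diagonal blocks are erased.
-/

section DerivMultilinear

variable {𝕜 ι E G : Type*} {F : ι → Type*} [NontriviallyNormedField 𝕜] [Fintype ι]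
  [NormedAddCommGroup E] [NormedSpace 𝕜 E] [∀ i, NormedAddCommGroup (F i)]
  [∀ i, NormedSpace 𝕜 (F i)] [NormedAddCommGroup G] [NormedSpace 𝕜 G]

theorem iteratedFDeriv_continuousMultilinearMap_comp_apply (f : ContinuousMultilinearMap 𝕜 F G)
    (L : E →L[𝕜] ∀ i, F i) {k : ℕ} (x : E) (v : Fin k → E) :
    iteratedFDeriv 𝕜 k (f ∘ L) x v = ∑ e : Fin k ↪ ι, f fun i =>
      if h : ∃ l, e l = i then L (v h.choose) i else L x i := by
  rw [L.iteratedFDeriv_comp_right f.contDiff x le_rfl,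
    ContinuousMultilinearMap.compContinuousLinearMap_apply,
    ContinuousMultilinearMap.iteratedFDeriv_eq, ContinuousMultilinearMap.iteratedFDeriv, sum_apply]
  refine Finset.sum_congr rfl fun e _ => congrArg f (funext fun i => ?_)
  by_cases hi : ∃ l, e l = i
  · have hchoose : e.toEquivRange.symm ⟨i, hi⟩ = hi.choose :=
      e.toEquivRange.symm_apply_eq.2 (Subtype.ext hi.choose_spec.symm)
    rw [dif_pos hi, ← hchoose]
    exact dif_pos hi
  · rw [dif_neg hi]
    exact dif_neg hi

end DerivMultilinear

section StrictMono

variable {α : Type*} [LinearOrder α] {k : ℕ}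

theorem exists_perm_strictMono_comp {f : Fin k → α} (hf : Function.Injective f) :
    ∃ σ : Equiv.Perm (Fin k), StrictMono (f ∘ σ) :=
  ⟨Tuple.sort f, (Tuple.monotone_sort f).strictMono_of_injective
    (hf.comp (Tuple.sort f).injective)⟩

theorem existsUnique_strictMono_range_eq {f : Fin k → α} (hf : Function.Injective f) :
    ∃! g : Fin k → α, StrictMono g ∧ Set.range g = Set.range f := by
  obtain ⟨σ, hσ⟩ := exists_perm_strictMono_comp hf
  have hrange : Set.range (f ∘ σ) = Set.range f := σ.surjective.range_comp f
  exact ⟨f ∘ σ, ⟨hσ, hrange⟩, fun g hg => (hg.1.range_inj hσ).1 (hg.2.trans hrange.symm)⟩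

theorem strictMono_comp_perm_inj {β β' : Fin k → α} (hβ : StrictMono β) (hβ' : StrictMono β')
    {σ σ' : Equiv.Perm (Fin k)} : β ∘ σ = β' ∘ σ' ↔ β = β' ∧ σ = σ' := by
  refine ⟨fun h => ?_, fun ⟨hββ', hσσ'⟩ => by rw [hββ', hσσ']⟩
  have hββ' : β = β' := by
    rw [← hβ.range_inj hβ', ← σ.surjective.range_comp β, h, σ'.surjective.range_comp]
  subst hββ'
  exact ⟨rfl, Equiv.ext fun l => hβ.injective (congrFun h l)⟩

theorem sum_embedding_eq_sum_perm_sum_strictMono [Fintype α] {M : Type*} [AddCommMonoid M]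
    (F : (Fin k → α) → M) :
    ∑ e : Fin k ↪ α, F e =
      ∑ σ : Equiv.Perm (Fin k), ∑ β : Fin k → α with StrictMono β, F (β ∘ σ) := by
  rw [← Finset.sum_product']
  symm
  refine Finset.sum_bij
    (fun p hp => ⟨p.2 ∘ p.1, StrictMono.injective (by simpa using hp) |>.comp p.1.injective⟩)
    (fun _ _ => Finset.mem_univ _) ?injective ?surjective fun _ _ => rfl
  case injective =>
    rintro ⟨σ, β⟩ hp ⟨σ', β'⟩ hp' h
    obtain ⟨hβ, hσ⟩ := (strictMono_comp_perm_inj (by simpa using hp) (by simpa using hp')).1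
      (congrArg DFunLike.coe h)
    exact Prod.ext hσ hβ
  case surjective =>
    intro e _
    obtain ⟨σ, hσ⟩ := exists_perm_strictMono_comp e.injective
    exact ⟨(σ.symm, e ∘ σ), by simpa using hσ, by ext; simp⟩

end StrictMono

section Immanant

variable {n k : ℕ} {α β : Fin k → Fin n}

theorem mem_Qset : α ∈ Qset k n ↔ StrictMono α := by
  simp [Qset]

theorem range_complEnum (hα : Function.Injective α) :
    Set.range (complEnum α) = (Set.range α)ᶜ := by
  have hfilter : (Finset.univ.filter fun j => j ∉ Set.range α) = (Finset.univ.image α)ᶜ := by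
    ext j
    simp
  have hcard : (Finset.univ.filter fun j => j ∉ Set.range α).card = n - k := by
    rw [hfilter, Finset.card_compl, Finset.card_image_of_injective _ hα]
    simp
  rw [complEnum, dif_pos hcard, Finset.range_orderEmbOfFin]
  ext j
  simp

section ReplacedColumns

variable (A : Matrix (Fin n) (Fin n) ℂ) (X : Fin k → Matrix (Fin n) (Fin n) ℂ)

theorem replCols_apply (hβ : Function.Injective β) (i : Fin n) (l : Fin k) :
    replCols A β X i (β l) = X l i (β l) := by
  have hl : ∃ l', β l' = β l := ⟨l, rfl⟩
  rw [replCols, Matrix.of_apply, dif_pos hl]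
  exact congrArg (fun m => X m i (β l)) (hβ (Classical.choose_spec hl))

theorem replCols_apply_of_notMem_range (i : Fin n) {j : Fin n} (hj : j ∉ Set.range β) :
    replCols A β X i j = A i j :=
  dif_neg hj

theorem zRepl_submatrix (σ : Equiv.Perm (Fin k)) :
    (zRepl β σ X).submatrix α β = (replCols A β (X ∘ σ)).submatrix α β := by
  ext p q
  simp [zRepl, replCols]

theorem zRepl_const_submatrix (Y : Matrix (Fin n) (Fin n) ℂ) (σ : Equiv.Perm (Fin k)) :
    (zRepl β σ fun _ => Y).submatrix α β = Y.submatrix α β := by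
  ext p q
  simp [zRepl]

theorem delSub_replCols (hβ : Function.Injective β) :
    delSub (replCols A β X) α β = delSub A α β := by
  ext p q
  refine replCols_apply_of_notMem_range A X _ ?_
  rw [← Set.mem_compl_iff, ← range_complEnum hβ]
  exact Set.mem_range_self q

theorem replCols_comp_perm (hβ : Function.Injective β) (σ : Equiv.Perm (Fin k)) :
    replCols A (β ∘ σ) X = replCols A β (X ∘ σ.symm) := by
  ext i j
  by_cases hj : j ∈ Set.range (β ∘ σ)
  · obtain ⟨l, rfl⟩ := hj
    rw [replCols_apply A X (hβ.comp σ.injective), Function.comp_apply, replCols_apply A _ hβ,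
      Function.comp_apply, σ.symm_apply_apply]
  · rw [replCols_apply_of_notMem_range A X i hj,
      replCols_apply_of_notMem_range A _ i (by rwa [σ.surjective.range_comp] at hj)]

end ReplacedColumns

section Derivative

variable (χ : Equiv.Perm (Fin n) → ℂ)

/-- The immanant as a continuous multilinear function of the columns of a matrix. -/
noncomputable def immColumns : ContinuousMultilinearMap ℂ (fun _ : Fin n => Fin n → ℂ) ℂ :=
  ∑ σ : Equiv.Perm (Fin n), χ σ •
    (ContinuousMultilinearMap.mkPiAlgebra ℂ (Fin n) ℂ).compContinuousLinearMap
      fun j => ContinuousLinearMap.proj (σ.symm j)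

theorem immColumns_apply (c : Fin n → Fin n → ℂ) :
    immColumns χ c = imm χ (Matrix.of c).transpose := by
  rw [immColumns, imm, sum_apply]
  refine Finset.sum_congr rfl fun σ _ => congrArg (χ σ * ·) ?_
  exact (Fintype.prod_equiv σ _ _ fun i => by simp).symm

theorem iteratedFDeriv_imm (A : Matrix (Fin n) (Fin n) ℂ) (X : Fin k → Matrix (Fin n) (Fin n) ℂ) :
    iteratedFDeriv ℂ k (imm χ) A X = ∑ e : Fin k ↪ Fin n, imm χ (replCols A e X) := by
  let columns : Matrix (Fin n) (Fin n) ℂ →L[ℂ] (Fin n → Fin n → ℂ) :=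
    (Matrix.transposeLinearEquiv (Fin n) (Fin n) ℂ ℂ).toLinearMap.toContinuousLinearMap
  have himm : imm χ = immColumns χ ∘ columns :=
    funext fun M => (immColumns_apply χ (columns M)).symm
  rw [himm]
  refine (iteratedFDeriv_continuousMultilinearMap_comp_apply
    (immColumns χ) columns A X).trans ?_
  refine Finset.sum_congr rfl fun e _ => congrArg (immColumns χ) (funext fun j => ?_)
  by_cases hj : ∃ l, e l = j
  · rw [dif_pos hj]
    have hreplCols (i : Fin n) : replCols A e X i j = X hj.choose i j := dif_pos hj
    exact funext fun i => (hreplCols i).symm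
  · rw [dif_neg hj]
    exact funext fun i => (replCols_apply_of_notMem_range A X i hj).symm

theorem iteratedFDeriv_imm_eq_sum_replCols (A : Matrix (Fin n) (Fin n) ℂ)
    (X : Fin k → Matrix (Fin n) (Fin n) ℂ) :
    iteratedFDeriv ℂ k (imm χ) A X =
      ∑ σ : Equiv.Perm (Fin k), ∑ β ∈ Qset k n, imm χ (replCols A β (X ∘ σ)) := by
  rw [iteratedFDeriv_imm,
    sum_embedding_eq_sum_perm_sum_strictMono fun e => imm χ (replCols A e X)]
  refine Fintype.sum_equiv (Equiv.inv _) _ _ fun σ => Finset.sum_congr rfl fun β hβ => ?_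
  rw [replCols_comp_perm A X (mem_Qset.1 hβ).injective]
  rfl

end Derivative

section LaplaceExpansion

theorem maskM_apply (R : Matrix (Fin n) (Fin n) ℂ) (i j : Fin n) :
    maskM R α β i j = if i ∈ Set.range α ↔ j ∈ Set.range β then R i j else 0 := by
  by_cases hi : i ∈ Set.range α <;> by_cases hj : j ∈ Set.range β <;>
    simp_all [maskM]

theorem dSum_submatrix_delSub (hα : Function.Injective α) (hβ : Function.Injective β)
    (R : Matrix (Fin n) (Fin n) ℂ) :
    dSum α β (R.submatrix α β) (delSub R α β) = maskM R α β := by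
  have exists_complEnum {γ : Fin k → Fin n} (hγ : Function.Injective γ) {i : Fin n}
      (hi : ¬ ∃ p, γ p = i) : ∃ p, complEnum γ p = i :=
    (range_complEnum hγ).ge hi
  ext i j
  rw [maskM_apply]
  simp only [dSum, delSub, Matrix.of_apply, Matrix.submatrix_apply, Set.mem_range]
  by_cases hi : ∃ p, α p = i <;> by_cases hj : ∃ q, β q = j
  · rw [dif_pos hi, dif_pos hj, if_pos (iff_of_true hi hj), hi.choose_spec, hj.choose_spec]
  · rw [dif_pos hi, dif_neg hj, if_neg fun h => hj (h.1 hi)]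
  · rw [dif_neg hi, dif_pos hj, if_neg fun h => hi (h.2 hj)]
  · have hi' := exists_complEnum hα hi
    have hj' := exists_complEnum hβ hj
    rw [dif_neg hi, dif_neg hj, dif_pos hi', dif_pos hj', if_pos (iff_of_false hi hj),
      hi'.choose_spec, hj'.choose_spec]

theorem sum_Qset_prod_maskM (hβ : Function.Injective β) (R : Matrix (Fin n) (Fin n) ℂ)
    (τ : Equiv.Perm (Fin n)) :
    ∑ α ∈ Qset k n, ∏ i, maskM R α β i (τ i) = ∏ i, R i (τ i) := by
  obtain ⟨α, ⟨hα, hrange⟩, hunique⟩ := existsUnique_strictMono_range_eq (τ.symm.injective.comp hβ)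
  have mem_range_iff (i : Fin n) : i ∈ Set.range (τ.symm ∘ β) ↔ τ i ∈ Set.range β := by
    simp [Equiv.symm_apply_eq]
  rw [Finset.sum_eq_single_of_mem α (mem_Qset.2 hα)]
  · simp only [maskM_apply, hrange, mem_range_iff, if_true]
  · intro α' hα' hne
    obtain ⟨i, hi⟩ : ∃ i, ¬ (i ∈ Set.range α' ↔ τ i ∈ Set.range β) := by
      by_contra! hmem
      exact hne (hunique α' ⟨mem_Qset.1 hα', Set.ext fun i =>
        (hmem i).trans (mem_range_iff i).symm⟩)
    exact Finset.prod_eq_zero (Finset.mem_univ i) ((maskM_apply R i (τ i)).trans (if_neg hi))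

theorem imm_eq_sum_imm_maskM (χ : Equiv.Perm (Fin n) → ℂ) (hβ : Function.Injective β)
    (R : Matrix (Fin n) (Fin n) ℂ) :
    imm χ R = ∑ α ∈ Qset k n, imm χ (maskM R α β) := by
  simp only [imm]
  rw [Finset.sum_comm]
  simp only [← Finset.mul_sum, sum_Qset_prod_maskM hβ]

theorem imm_replCols_eq_sum_imm_dSum (χ : Equiv.Perm (Fin n) → ℂ) (hβ : Function.Injective β)
    (A : Matrix (Fin n) (Fin n) ℂ) (X : Fin k → Matrix (Fin n) (Fin n) ℂ)
    (σ : Equiv.Perm (Fin k)) :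
    imm χ (replCols A β (X ∘ σ)) = ∑ α ∈ Qset k n,
      imm χ (dSum α β ((zRepl β σ X).submatrix α β) (delSub A α β)) := by
  rw [imm_eq_sum_imm_maskM χ hβ]
  refine Finset.sum_congr rfl fun α hα => ?_
  rw [← dSum_submatrix_delSub (mem_Qset.1 hα).injective hβ, delSub_replCols A _ hβ,
    zRepl_submatrix A X]

end LaplaceExpansion

theorem iteratedFDeriv_imm_eq_sum_dSum (χ : Equiv.Perm (Fin n) → ℂ)
    (A : Matrix (Fin n) (Fin n) ℂ) (X : Fin k → Matrix (Fin n) (Fin n) ℂ) :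
    iteratedFDeriv ℂ k (imm χ) A X =
      ∑ σ : Equiv.Perm (Fin k), ∑ α ∈ Qset k n, ∑ β ∈ Qset k n,
        imm χ (dSum α β ((zRepl β σ X).submatrix α β) (delSub A α β)) := by
  rw [iteratedFDeriv_imm_eq_sum_replCols]
  refine Finset.sum_congr rfl fun σ _ => ?_
  rw [Finset.sum_comm]
  exact Finset.sum_congr rfl fun β hβ =>
    imm_replCols_eq_sum_imm_dSum χ (mem_Qset.1 hβ).injective A X σ

end Immanant

/-- Second formula. For `1 ≤ k ≤ n`,
`D^k d_χ(A)(X^1,…,X^k) = ∑_{σ ∈ S_k} ∑_{α,β ∈ Q_{k,n}} d_χ(X^σ_β[α|β] ⊕_{α|β} A(α|β))`;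
in particular
`D^k d_χ(A)(X,…,X) = k! ∑_{α,β ∈ Q_{k,n}} d_χ(X[α|β] ⊕_{α|β} A(α|β))`. -/
theorem immanant_higher_deriv_second_expression (n k : ℕ) (hk : 1 ≤ k) (hkn : k ≤ n)
    (χ : Equiv.Perm (Fin n) → ℂ) (A : Matrix (Fin n) (Fin n) ℂ)
    (X : Fin k → Matrix (Fin n) (Fin n) ℂ) :
    (iteratedFDeriv ℂ k (imm χ) A (fun i => X i) =
      ∑ σ : Equiv.Perm (Fin k), ∑ α ∈ Qset k n, ∑ β ∈ Qset k n,
        imm χ (dSum α β ((zRepl β σ X).submatrix α β) (delSub A α β))) ∧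
    ∀ Y : Matrix (Fin n) (Fin n) ℂ,
      iteratedFDeriv ℂ k (imm χ) A (fun _ => Y) =
        (k.factorial : ℂ) * ∑ α ∈ Qset k n, ∑ β ∈ Qset k n,
          imm χ (dSum α β (Y.submatrix α β) (delSub A α β)) := by
  refine ⟨iteratedFDeriv_imm_eq_sum_dSum χ A X, fun Y => ?_⟩
  simp only [iteratedFDeriv_imm_eq_sum_dSum, zRepl_const_submatrix, Finset.sum_const,
    Finset.card_univ, Fintype.card_perm, Fintype.card_fin, nsmul_eq_mul]
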